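/- Let P be an n×n real symmetric positive definite matrix, H a ν×n real matrix, R a ν×ν real symmetric positive definite matrix, K = P·Hᵀ·(H·P·Hᵀ + R)⁻¹ the Kalman gain, P₊ = (I − K·H)·P the posterior covariance (positive definite, hence invertible), and Φ any n×n real matrix. Then the infinite-time smoother gain L∞ = P₊·Φᵀ·P₊⁻¹·(I − K·H) and the matrix A* = Φᵀ·(I − Hᵀ·Kᵀ) are similar via P₊, i.e., L∞ = P₊·A*·P₊⁻¹. In particular L∞ and A* have the same characteristic polynomial and the same eigenvalues (the paper's Lemma 2). -/

import Mathlib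

open Matrix

/-!
Put `M = 1 - K * H` and `S = H * P * Hᵀ + R`. Since `P` and `P₊ = M * P` are both symmetric,
`M * P = P * Mᵀ`, and multiplying by `M` on the left gives `M * P₊ = P₊ * Mᵀ`. Moving `M` through
`P₊⁻¹` in the smoother gain therefore exhibits it as the conjugate of `A*` by `P₊`. That `P₊` is
invertible follows from `det (1 - K * H) = det (1 - H * K)` together with `1 - H * K = R * S⁻¹`.
-/

section SimilarMatrices

variable {n 𝕜 : Type*} [Fintype n] [CommRing 𝕜]

lemma mul_eq_mul_transpose_of_isSymm {M P : Matrix n n 𝕜} (hP : P.IsSymm)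
    (hMP : (M * P).IsSymm) : M * P = P * Mᵀ := by
  rw [← hMP.eq, transpose_mul, hP.eq]

variable [DecidableEq n]

lemma mul_mul_inv_mul_eq_conj {Q M N : Matrix n n 𝕜} (hQ : IsUnit Q) (hMQ : M * Q = Q * N)
    (F : Matrix n n 𝕜) : Q * F * Q⁻¹ * M = Q * (F * N) * Q⁻¹ := by
  have hQdet : IsUnit Q.det := (isUnit_iff_isUnit_det Q).mp hQ
  have hQM : Q⁻¹ * M = N * Q⁻¹ := by
    calc Q⁻¹ * M = Q⁻¹ * (M * Q) * Q⁻¹ := by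
          rw [Matrix.mul_assoc, mul_nonsing_inv_cancel_right _ _ hQdet]
      _ = N * Q⁻¹ := by rw [hMQ, nonsing_inv_mul_cancel_left _ _ hQdet]
  rw [Matrix.mul_assoc, hQM]
  simp only [Matrix.mul_assoc]

lemma spectrum_eq_of_charpoly_eq {A B : Matrix n n 𝕜} (h : A.charpoly = B.charpoly) :
    spectrum 𝕜 A = spectrum 𝕜 B := by
  ext μ
  rw [spectrum.mem_iff, spectrum.mem_iff, isUnit_iff_isUnit_det, isUnit_iff_isUnit_det]
  simp only [algebraMap_eq_diagonal, Pi.algebraMap_def, Algebra.algebraMap_self_apply,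
    ← scalar_apply, ← eval_charpoly, h]

end SimilarMatrices

section KalmanFilter

variable {n ν 𝕜 : Type*} [Fintype n] [CommRing 𝕜] {P : Matrix n n 𝕜} {H : Matrix ν n 𝕜}
  {R : Matrix ν ν 𝕜}

/-- The covariance of the innovation (the measurement prediction error) for the prior covariance
`P`, the measurement sensitivity `H` and the measurement noise covariance `R`. -/
def innovationCov (P : Matrix n n 𝕜) (H : Matrix ν n 𝕜) (R : Matrix ν ν 𝕜) : Matrix ν ν 𝕜 :=
  H * P * Hᵀ + R

lemma isSymm_innovationCov (hP : P.IsSymm) (hR : R.IsSymm) : (innovationCov P H R).IsSymm := by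
  simp only [IsSymm, innovationCov, transpose_add, transpose_mul, transpose_transpose, hP.eq,
    hR.eq, Matrix.mul_assoc]

lemma posDef_innovationCov [Finite ν] [PartialOrder 𝕜] [StarRing 𝕜] [TrivialStar 𝕜] [AddLeftMono 𝕜]
    (hP : P.PosSemidef) (hR : R.PosDef) : (innovationCov P H R).PosDef := by
  have hHPH : (H * P * Hᵀ).PosSemidef := by
    simpa only [conjTranspose_eq_transpose_of_trivial] using hP.mul_mul_conjTranspose_same H
  exact PosDef.posSemidef_add hHPH hR

variable [Fintype ν] [DecidableEq ν]

/-- The Kalman gain `K`, meaningful when the innovation covariance is invertible. -/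
noncomputable def kalmanGain (P : Matrix n n 𝕜) (H : Matrix ν n 𝕜) (R : Matrix ν ν 𝕜) :
    Matrix n ν 𝕜 :=
  P * Hᵀ * (innovationCov P H R)⁻¹

lemma one_sub_mul_kalmanGain (hS : IsUnit (innovationCov P H R)) :
    1 - H * kalmanGain P H R = R * (innovationCov P H R)⁻¹ := by
  have hSdet := (isUnit_iff_isUnit_det _).mp hS
  calc 1 - H * kalmanGain P H R
      = (innovationCov P H R - H * P * Hᵀ) * (innovationCov P H R)⁻¹ := by
        rw [Matrix.sub_mul, mul_nonsing_inv _ hSdet, kalmanGain]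
        simp only [Matrix.mul_assoc]
    _ = R * (innovationCov P H R)⁻¹ := by rw [innovationCov, add_sub_cancel_left]

variable [DecidableEq n]

/-- The covariance `P₊` of the state estimate after the measurement update. -/
noncomputable def posteriorCov (P : Matrix n n 𝕜) (H : Matrix ν n 𝕜) (R : Matrix ν ν 𝕜) :
    Matrix n n 𝕜 :=
  (1 - kalmanGain P H R * H) * P

lemma isSymm_posteriorCov (hP : P.IsSymm) (hR : R.IsSymm) : (posteriorCov P H R).IsSymm := by
  simp only [IsSymm, posteriorCov, kalmanGain, transpose_mul, transpose_sub,
    transpose_transpose, transpose_nonsing_inv, (isSymm_innovationCov hP hR).eq, hP.eq,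
    Matrix.sub_mul, Matrix.one_mul, Matrix.mul_assoc]

lemma one_sub_kalmanGain_mul_mul_posteriorCov (hP : P.IsSymm) (hR : R.IsSymm) :
    (1 - kalmanGain P H R * H) * posteriorCov P H R =
      posteriorCov P H R * (1 - Hᵀ * (kalmanGain P H R)ᵀ) := by
  have hMP : (1 - kalmanGain P H R * H) * P = P * (1 - kalmanGain P H R * H)ᵀ :=
    mul_eq_mul_transpose_of_isSymm hP (isSymm_posteriorCov hP hR)
  calc (1 - kalmanGain P H R * H) * posteriorCov P H R
      = (1 - kalmanGain P H R * H) * (P * (1 - kalmanGain P H R * H)ᵀ) := by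
        rw [posteriorCov, hMP]
    _ = posteriorCov P H R * (1 - Hᵀ * (kalmanGain P H R)ᵀ) := by
        rw [← Matrix.mul_assoc, ← posteriorCov, transpose_sub, transpose_one, transpose_mul]

lemma isUnit_posteriorCov (hP : IsUnit P) (hR : IsUnit R) (hS : IsUnit (innovationCov P H R)) :
    IsUnit (posteriorCov P H R) := by
  have hgain : IsUnit (1 - kalmanGain P H R * H) := by
    rw [isUnit_iff_isUnit_det, det_one_sub_mul_comm, one_sub_mul_kalmanGain hS,
      ← isUnit_iff_isUnit_det]
    exact hR.mul (isUnit_nonsing_inv_iff.mpr hS)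
  exact hgain.mul hP

/-- The infinite-time smoother gain `L∞` for the transition matrix `Φ`. -/
noncomputable def smootherGain (P : Matrix n n 𝕜) (H : Matrix ν n 𝕜) (R : Matrix ν ν 𝕜)
    (Φ : Matrix n n 𝕜) : Matrix n n 𝕜 :=
  posteriorCov P H R * Φᵀ * (posteriorCov P H R)⁻¹ * (1 - kalmanGain P H R * H)

/-- The paper's `A*`: the transpose of the matrix `(1 - K * H) * Φ` which propagates the error of
the filtered estimate from one step to the next. -/
noncomputable def dualErrorTransition (P : Matrix n n 𝕜) (H : Matrix ν n 𝕜) (R : Matrix ν ν 𝕜)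
    (Φ : Matrix n n 𝕜) : Matrix n n 𝕜 :=
  Φᵀ * (1 - Hᵀ * (kalmanGain P H R)ᵀ)

lemma smootherGain_eq_conj (hP : P.IsSymm) (hR : R.IsSymm) (hPp : IsUnit (posteriorCov P H R))
    (Φ : Matrix n n 𝕜) :
    smootherGain P H R Φ =
      posteriorCov P H R * dualErrorTransition P H R Φ * (posteriorCov P H R)⁻¹ :=
  mul_mul_inv_mul_eq_conj hPp (one_sub_kalmanGain_mul_mul_posteriorCov hP hR) Φᵀ

end KalmanFilter

theorem stmt4_general {n ν 𝕜 𝔸 : Type*} [Fintype n] [Fintype ν] [DecidableEq n] [DecidableEq ν]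
    [CommRing 𝕜] [CommRing 𝔸] (f : 𝕜 →+* 𝔸) {P : Matrix n n 𝕜} {H : Matrix ν n 𝕜}
    {R : Matrix ν ν 𝕜} (Φ : Matrix n n 𝕜) (hPsymm : P.IsSymm) (hRsymm : R.IsSymm)
    (hP : IsUnit P) (hR : IsUnit R) (hS : IsUnit (innovationCov P H R)) :
    smootherGain P H R Φ =
        posteriorCov P H R * dualErrorTransition P H R Φ * (posteriorCov P H R)⁻¹ ∧
      (smootherGain P H R Φ).charpoly = (dualErrorTransition P H R Φ).charpoly ∧
      spectrum 𝔸 ((smootherGain P H R Φ).map f) =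
        spectrum 𝔸 ((dualErrorTransition P H R Φ).map f) := by
  have hPp := isUnit_posteriorCov hP hR hS
  have hconj := smootherGain_eq_conj hPsymm hRsymm hPp Φ
  have hchar : (smootherGain P H R Φ).charpoly = (dualErrorTransition P H R Φ).charpoly := by
    rw [hconj]
    exact charpoly_units_conj hPp.unit _
  refine ⟨hconj, hchar, spectrum_eq_of_charpoly_eq ?_⟩
  rw [charpoly_map, charpoly_map, hchar]

/-- With prior covariance `P` (symmetric positive definite), measurement
sensitivity `H`, noise covariance `R` (symmetric positive definite), Kalman gain
`K = P * Hᵀ * (H * P * Hᵀ + R)⁻¹`, posterior covariance `P₊ = (I - K * H) * P`, and any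
state-transition matrix `Φ`, the infinite-time smoother gain
`L∞ = P₊ * Φᵀ * P₊⁻¹ * (I - K * H)` and the matrix `A* = Φᵀ * (I - Hᵀ * Kᵀ)` are similar via
`P₊`, i.e. `L∞ = P₊ * A* * P₊⁻¹`; in particular they have the same characteristic polynomial
and the same (complex) eigenvalues (the paper's Lemma 2). -/
theorem stmt4 {n ν : ℕ} (P : Matrix (Fin n) (Fin n) ℝ) (H : Matrix (Fin ν) (Fin n) ℝ)
    (R : Matrix (Fin ν) (Fin ν) ℝ) (Φ : Matrix (Fin n) (Fin n) ℝ)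
    (K : Matrix (Fin n) (Fin ν) ℝ) (Pp Linf Astar : Matrix (Fin n) (Fin n) ℝ)
    (hP : P.PosDef) (hR : R.PosDef)
    (hK : K = P * Hᵀ * (H * P * Hᵀ + R)⁻¹)
    (hPp : Pp = (1 - K * H) * P)
    (hL : Linf = Pp * Φᵀ * Pp⁻¹ * (1 - K * H))
    (hA : Astar = Φᵀ * (1 - Hᵀ * Kᵀ)) :
    Linf = Pp * Astar * Pp⁻¹ ∧
    Linf.charpoly = Astar.charpoly ∧
    spectrum ℂ (Linf.map (Complex.ofReal)) = spectrum ℂ (Astar.map (Complex.ofReal)) := by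
  subst hL hA hPp hK
  exact stmt4_general Complex.ofRealHom Φ (isHermitian_iff_isSymm.mp hP.isHermitian)
    (isHermitian_iff_isSymm.mp hR.isHermitian) hP.isUnit hR.isUnit
    (posDef_innovationCov hP.posSemidef hR).isUnit
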